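/- Soundness and completeness of the fixpoint semantics of LO₁: for every LO₁ program P, F₁(P) = O₁(P), i.e., the least fixpoint of T¹_P equals the set of facts A such that the sequent P ⇒₁ A is provable in LO₁. -/

import Mathlib

/-- LO₁ goals: atoms, ⊤, the constant 1, ⅋ (par) and & (with). -/
inductive Goal1 (σ : Type) : Type
  | atom : σ → Goal1 σ
  | top : Goal1 σ
  | one : Goal1 σ
  | par : Goal1 σ → Goal1 σ → Goal1 σ
  | wth : Goal1 σ → Goal1 σ → Goal1 σ
  deriving DecidableEq

variable {σ : Type} [DecidableEq σ] [Fintype σ]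

/-- A fact: a finite multiset over the signature. -/
abbrev LOFact (σ : Type) := Multiset σ

/-- A context: a finite multiset of LO₁ goals. -/
abbrev Ctx1 (σ : Type) := Multiset (Goal1 σ)

/-- An LO₁ program: a finite set of clauses `H ⊸ G`. -/
abbrev LO1Program (σ : Type) := Finset (Multiset σ × Goal1 σ)

/-- LO₁ provability `P ⇒₁ Δ`. -/
inductive LO1Prov (P : LO1Program σ) : Ctx1 σ → Prop
  | oneR : LO1Prov P ({Goal1.one} : Ctx1 σ)
  | topR (Δ : Ctx1 σ) : LO1Prov P (Goal1.top ::ₘ Δ)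
  | parR (G₁ G₂ : Goal1 σ) (Δ : Ctx1 σ) :
      LO1Prov P (G₁ ::ₘ G₂ ::ₘ Δ) → LO1Prov P (Goal1.par G₁ G₂ ::ₘ Δ)
  | wthR (G₁ G₂ : Goal1 σ) (Δ : Ctx1 σ) :
      LO1Prov P (G₁ ::ₘ Δ) → LO1Prov P (G₂ ::ₘ Δ) → LO1Prov P (Goal1.wth G₁ G₂ ::ₘ Δ)
  | bc (H : Multiset σ) (G : Goal1 σ) (A : LOFact σ) :
      (H, G) ∈ P → LO1Prov P (G ::ₘ A.map Goal1.atom) →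
      LO1Prov P (H.map Goal1.atom + A.map Goal1.atom)

/-- The LO₁ satisfiability judgment `I ⊨₁ Δ[A]`. -/
inductive Sat1 (I : Set (LOFact σ)) : Ctx1 σ → LOFact σ → Prop
  | one : Sat1 I ({Goal1.one} : Ctx1 σ) 0
  | top (Δ : Ctx1 σ) (A : LOFact σ) : Sat1 I (Goal1.top ::ₘ Δ) A
  | fact (A A' : LOFact σ) : A + A' ∈ I → Sat1 I (A.map Goal1.atom) A'
  | par (G₁ G₂ : Goal1 σ) (Δ : Ctx1 σ) (A : LOFact σ) :
      Sat1 I (G₁ ::ₘ G₂ ::ₘ Δ) A → Sat1 I (Goal1.par G₁ G₂ ::ₘ Δ) A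
  | wth (G₁ G₂ : Goal1 σ) (Δ : Ctx1 σ) (A : LOFact σ) :
      Sat1 I (G₁ ::ₘ Δ) A → Sat1 I (G₂ ::ₘ Δ) A → Sat1 I (Goal1.wth G₁ G₂ ::ₘ Δ) A

/-- The LO₁ immediate-consequence operator `T¹_P`. -/
def TP1 (P : LO1Program σ) (I : Set (LOFact σ)) : Set (LOFact σ) :=
  { M | ∃ H G A, (H, G) ∈ P ∧ Sat1 I ({G} : Ctx1 σ) A ∧ M = H + A }

/-- The operational semantics `O₁(P)`: the set of LO₁-provable facts. -/
def OP1 (P : LO1Program σ) : Set (LOFact σ) := { A : LOFact σ | LO1Prov P (A.map Goal1.atom) }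

/-! The operator `TP1 P` is monotone, so its least fixpoint is its least prefixpoint, and `OP1 P`
is that prefixpoint. It is a prefixpoint because a derivation of `Sat1 (OP1 P) Δ A` becomes
a proof of the merged context `Δ + A`. It lies below every prefixpoint `I` because, conversely, a
proof of a context yields `Sat1 I Δ A` for every splitting of that context as `Δ + A` with `A` a
fact: a non-atomic formula always lies in `Δ`, and a backchaining step, whose conclusion is a fact,
is absorbed by one application of `TP1 P`. -/

section MultisetSplitting

variable {β γ : Type*} {s t : Multiset β}

theorem exists_cons_eq_of_add_eq_cons {x : β} {u : Multiset β} (h : s + t = x ::ₘ u)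
    (hx : x ∉ t) : ∃ s', s = x ::ₘ s' ∧ s' + t = u := by
  have hxs : x ∈ s :=
    (Multiset.mem_add.1 (h ▸ Multiset.mem_cons_self x u)).resolve_right hx
  obtain ⟨s', rfl⟩ := Multiset.exists_cons_of_mem hxs
  rw [Multiset.cons_add] at h
  exact ⟨s', rfl, (Multiset.cons_inj_right x).1 h⟩

theorem exists_map_eq_of_subset_map {f : γ → β} {u : Multiset γ} (h : s ⊆ u.map f) :
    ∃ v : Multiset γ, v.map f = s := by
  have : CanLift β γ f (∃ a, f a = ·) := ⟨fun _ hb => hb⟩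
  refine CanLift.prf s fun b hb => ?_
  obtain ⟨a, -, rfl⟩ := Multiset.mem_map.1 (h hb)
  exact ⟨a, rfl⟩

end MultisetSplitting

section Fixpoint

variable {α : Type} {P : LO1Program α} {I J : Set (LOFact α)} {Δ : Ctx1 α} {A : LOFact α}

theorem Goal1.atom_injective : Function.Injective (Goal1.atom : α → Goal1 α) :=
  fun _ _ => Goal1.atom.inj

theorem Sat1.mono (hIJ : I ⊆ J) (h : Sat1 I Δ A) : Sat1 J Δ A := by
  induction h with
  | one => exact .one
  | top Δ A => exact .top Δ A
  | fact A A' hA => exact .fact A A' (hIJ hA)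
  | par G₁ G₂ Δ A _ ih => exact .par G₁ G₂ Δ A ih
  | wth G₁ G₂ Δ A _ _ ih₁ ih₂ => exact .wth G₁ G₂ Δ A ih₁ ih₂

theorem sat1_zero_iff : Sat1 I 0 A ↔ A ∈ I := by
  refine ⟨fun h => ?_, fun h => ?_⟩
  · generalize hΔ : (0 : Ctx1 α) = Δ at h
    cases h with
    | fact B _ hB =>
      obtain rfl := Multiset.zero_eq_map.1 hΔ
      rwa [zero_add] at hB
    | one => exact absurd hΔ (Multiset.zero_ne_singleton _)
    | _ => exact absurd hΔ Multiset.zero_ne_cons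
  · simpa only [Multiset.map_zero] using Sat1.fact 0 A (by rwa [zero_add])

theorem tp1_monotone : Monotone (TP1 P) := by
  rintro I J hIJ _ ⟨H, G, A, hP, hG, rfl⟩
  exact ⟨H, G, A, hP, hG.mono hIJ, rfl⟩

theorem Sat1.lo1Prov (h : Sat1 (OP1 P) Δ A) : LO1Prov P (Δ + A.map Goal1.atom) := by
  induction h with
  | one => exact .oneR
  | top Δ A =>
    rw [Multiset.cons_add]
    exact .topR _
  | fact A A' hA =>
    rw [← Multiset.map_add]
    exact hA
  | par G₁ G₂ Δ A _ ih =>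
    simp only [Multiset.cons_add] at ih ⊢
    exact .parR _ _ _ ih
  | wth G₁ G₂ Δ A _ _ ih₁ ih₂ =>
    simp only [Multiset.cons_add] at ih₁ ih₂ ⊢
    exact .wthR _ _ _ ih₁ ih₂

theorem tp1_op1_subset : TP1 P (OP1 P) ⊆ OP1 P := by
  rintro _ ⟨H, G, A, hP, hG, rfl⟩
  have hprov : LO1Prov P (G ::ₘ A.map Goal1.atom) := hG.lo1Prov
  rw [OP1, Set.mem_ofPred_eq, Multiset.map_add]
  exact .bc H G A hP hprov

theorem LO1Prov.sat1 (hI : TP1 P I ⊆ I) (h : LO1Prov P (Δ + A.map Goal1.atom)) :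
    Sat1 I Δ A := by
  generalize hΓ : Δ + A.map Goal1.atom = Γ at h
  induction h generalizing Δ A with
  | oneR =>
    obtain ⟨Δ', rfl, hΔ'⟩ := exists_cons_eq_of_add_eq_cons hΓ (by simp)
    obtain ⟨rfl, hA⟩ := add_eq_zero.1 hΔ'
    obtain rfl := Multiset.map_eq_zero.1 hA
    exact .one
  | topR Γ =>
    obtain ⟨Δ', rfl, -⟩ := exists_cons_eq_of_add_eq_cons hΓ (by simp)
    exact .top Δ' A
  | parR G₁ G₂ Γ _ ih =>
    obtain ⟨Δ', rfl, rfl⟩ := exists_cons_eq_of_add_eq_cons hΓ (by simp)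
    exact .par G₁ G₂ Δ' A (ih (by simp only [Multiset.cons_add]))
  | wthR G₁ G₂ Γ _ _ ih₁ ih₂ =>
    obtain ⟨Δ', rfl, rfl⟩ := exists_cons_eq_of_add_eq_cons hΓ (by simp)
    exact .wth G₁ G₂ Δ' A (ih₁ (Multiset.cons_add ..)) (ih₂ (Multiset.cons_add ..))
  | bc H G A' hP _ ih =>
    rw [← Multiset.map_add] at hΓ
    have hΔ : Δ ⊆ (H + A').map Goal1.atom :=
      hΓ ▸ Multiset.subset_of_le (Multiset.le_add_right Δ _)
    obtain ⟨B, rfl⟩ := exists_map_eq_of_subset_map hΔ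
    rw [← Multiset.map_add] at hΓ
    have hBA : B + A = H + A' := Multiset.map_injective Goal1.atom_injective hΓ
    have hG : Sat1 I {G} A' := ih (Multiset.singleton_add ..)
    exact .fact B A (hBA ▸ hI ⟨H, G, A', hP, hG, rfl⟩)

theorem op1_subset_of_tp1_subset (hI : TP1 P I ⊆ I) : OP1 P ⊆ I := by
  intro A hA
  have hsplit : LO1Prov P (0 + A.map Goal1.atom) := by rwa [zero_add]
  exact sat1_zero_iff.1 (hsplit.sat1 hI)

/-- `T¹_P` bundled as a monotone map, so that `F₁(P)` is its `OrderHom.lfp`. -/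
def tp1Hom (P : LO1Program α) : Set (LOFact α) →o Set (LOFact α) := ⟨TP1 P, tp1_monotone⟩

theorem lfp_tp1Hom (P : LO1Program α) : (tp1Hom P).lfp = OP1 P :=
  ((tp1Hom P).lfp_le tp1_op1_subset).antisymm
    ((tp1Hom P).le_lfp fun _ => op1_subset_of_tp1_subset)

theorem fixpoint1_eq_operational1_general (P : LO1Program α) :
    IsLeast {I : Set (LOFact α) | TP1 P I = I} (OP1 P) :=
  lfp_tp1Hom P ▸ (tp1Hom P).isLeast_lfp

end Fixpoint

/-- Soundness and completeness of the LO₁ fixpoint semantics: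
`O₁(P)` is the least fixpoint of `T¹_P`, i.e. `F₁(P) = O₁(P)`. -/
theorem fixpoint1_eq_operational1 (P : LO1Program σ) :
    IsLeast { I : Set (LOFact σ) | TP1 P I = I } (OP1 P) := by
  exact fixpoint1_eq_operational1_general P
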